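/- Let K > 0 and J ∈ ℝ, and assume φ_{K,J} attains its minimum over [−1,1] at a unique point m* ∈ (−1,1) with φ_{K,J}''(m*) > 0. Then there exist constants c > 0 and C > 0 (depending on K and J) such that for all n ≥ 1 and all x with 0 ≤ x ≤ c·n^{1/6}: | P_{n,K,J}(W_n > x) / P(Z > x) − 1 | ≤ C·(1 + x³)/√n, where Z is a standard normal random variable. -/

import Mathlib

/-!
The event `W_n > x` depends only on the number `k` of plus spins, so its probability is a ratio of
sums of level weights `lvlWeight n K J k = C(n,k) exp (n (K/3 m³ + J/2 m²))`, `m = 2k/n - 1`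
(`cubicProb_eq`). The corresponding values of `W_n` form a grid `u_k` of step `h = 2 √v / √n`, where
`v` is the second derivative of `φ` at `m*`.

Near `m*`, the Stirling formula with an `O(1/n)` remainder and the third-order Taylor expansion of `φ`
at its minimizer show that, up to a common factor, the weight is `h` times the standard normal
density at `u_k` times `exp (O((1 + |u_k|³) h))` (`lvlWeight_near`). This holds on a window
`|u_k| ≤ δ / h`, that is, at macroscopic distance in `m`. Outside the window the Chernoff bound
`C(n,k) ≤ exp (-n I(m))` and the gap of `φ` above its unique minimum make the weights exponentially
small in `n` (`lvlWeight_far`).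

The core is a Riemann-sum comparison with *relative* precision (`one_sided_sum`). Each weight is
compared with the Gaussian mass of the cell `[u, u + h]` (`cell_compare`). For `δ` small the factor
`exp (O(u³ h))` consumes only half of the Gaussian decay from `x` to `u`, so that the cell errors
are at most `(1 + x³) h · gDens x · h exp (-(1 + x)(u - x)/2)` up to a constant. They sum to
`(1 + x³) h · gDens x / (1 + x)`, which the Mills-ratio bound `gTail_lower` turns into
`(1 + x³) h · gTail x`. Applied at `x`, and at `0` on both halves of the grid, this gives numerator
and normalization (`grid_ratio`). For the remaining finitely many `n` both `x` and the ratio are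
bounded.
-/

open MeasureTheory ProbabilityTheory Real Filter

noncomputable section

/-- The spin value `±1` associated with a Boolean. -/
def spin (b : Bool) : ℝ := if b then 1 else -1

/-- Total magnetization `S_n(x) = ∑ i, x_i`. -/
def totalMag (n : ℕ) (x : Fin n → Bool) : ℝ := ∑ i, spin (x i)

/-- Magnetization per particle `m_n(x) = S_n(x)/n`. -/
def magPP (n : ℕ) (x : Fin n → Bool) : ℝ := totalMag n x / n

/-- Boltzmann–Gibbs weight of a configuration in the cubic Curie–Weiss model
(the reference factor `2^{-n}` is constant and cancels upon normalization). -/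
def cubicWeight (n : ℕ) (K J : ℝ) (x : Fin n → Bool) : ℝ :=
  Real.exp (n * (K / 3 * (magPP n x) ^ 3 + J / 2 * (magPP n x) ^ 2))

/-- The cubic Curie–Weiss Boltzmann–Gibbs probability measure `P_{n,K,J}`. -/
def cubicMeasure (n : ℕ) (K J : ℝ) : Measure (Fin n → Bool) :=
  (∑ x : Fin n → Bool, ENNReal.ofReal (cubicWeight n K J x))⁻¹ •
    ∑ x : Fin n → Bool, ENNReal.ofReal (cubicWeight n K J x) • Measure.dirac x

/-- The probability of an event under `P_{n,K,J}`, as a real number. -/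
def cubicProb (n : ℕ) (K J : ℝ) (s : Set (Fin n → Bool)) : ℝ :=
  (cubicMeasure n K J s).toReal

/-- The binary relative entropy `I(m)`. -/
def binEnt (m : ℝ) : ℝ :=
  (1 - m) / 2 * Real.log ((1 - m) / 2) + (1 + m) / 2 * Real.log ((1 + m) / 2)

/-- The function `φ_{K,J}(x) = I(x) − (K/3)x³ − (J/2)x²`. -/
def phiKJ (K J : ℝ) (x : ℝ) : ℝ := binEnt x - K / 3 * x ^ 3 - J / 2 * x ^ 2

/-- The standard normal cumulative distribution function. -/
def stdNormalCDF (z : ℝ) : ℝ :=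
  (ProbabilityTheory.gaussianReal 0 1 (Set.Iic z)).toReal

end


/-! ### The standard normal tail -/

/-- The standard normal density. -/
noncomputable def gDens (u : ℝ) : ℝ := (√(2 * π))⁻¹ * exp (-u ^ 2 / 2)

/-- The standard normal upper tail `P(Z > x)`. -/
noncomputable def gTail (x : ℝ) : ℝ := (gaussianReal 0 1 (Set.Ioi x)).toReal

lemma gDens_pos (u : ℝ) : 0 < gDens u := by unfold gDens; positivity

lemma gDens_eq : gaussianPDFReal 0 1 = gDens := by
  ext u; simp [gaussianPDFReal, gDens]

lemma gDens_anti {u v : ℝ} (hu : 0 ≤ u) (huv : u ≤ v) : gDens v ≤ gDens u := by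
  unfold gDens
  have : u ^ 2 ≤ v ^ 2 := by gcongr
  gcongr

lemma gDens_add (u h : ℝ) : gDens (u + h) = gDens u * exp (-(h * u + h ^ 2 / 2)) := by
  unfold gDens
  rw [mul_assoc, ← exp_add]; congr 2; ring

lemma gTail_sub {u v : ℝ} (huv : u ≤ v) :
    gTail u - gTail v = ∫ s in u..v, gDens s := by
  have h1 : (Set.Ioi u) = Set.Ioc u v ∪ Set.Ioi v := (Set.Ioc_union_Ioi_eq_Ioi huv).symm
  have hd : Disjoint (Set.Ioc u v) (Set.Ioi v) := by
    rw [Set.disjoint_left]; intro a ha hb; exact absurd ha.2 (not_le.2 hb)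
  have h2 : gaussianReal 0 1 (Set.Ioi u) =
      gaussianReal 0 1 (Set.Ioc u v) + gaussianReal 0 1 (Set.Ioi v) := by
    rw [h1, measure_union hd measurableSet_Ioi]
  have h3 : (gaussianReal 0 1 (Set.Ioc u v)).toReal = ∫ s in u..v, gDens s := by
    rw [gaussianReal_apply_eq_integral _ one_ne_zero, intervalIntegral.integral_of_le huv,
      ENNReal.toReal_ofReal, gDens_eq]
    exact setIntegral_nonneg measurableSet_Ioc fun s _ => gaussianPDFReal_nonneg _ _ _
  unfold gTail
  rw [h2, ENNReal.toReal_add (measure_ne_top _ _) (measure_ne_top _ _), h3]; ring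

lemma gDens_continuous : Continuous gDens := by unfold gDens; fun_prop

lemma gTail_sub_le {u v : ℝ} (hu : 0 ≤ u) (huv : u ≤ v) :
    gTail u - gTail v ≤ (v - u) * gDens u := by
  rw [gTail_sub huv]
  have := intervalIntegral.integral_mono_on (μ := volume) huv (gDens_continuous.intervalIntegrable _ _)
    ((continuous_const (y := gDens u)).intervalIntegrable u v)
    (fun s hs => gDens_anti hu hs.1)
  simpa using this

lemma le_gTail_sub {u v : ℝ} (hu : 0 ≤ u) (huv : u ≤ v) :
    (v - u) * gDens v ≤ gTail u - gTail v := by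
  rw [gTail_sub huv]
  have := intervalIntegral.integral_mono_on (μ := volume) huv
    ((continuous_const (y := gDens v)).intervalIntegrable u v)
    (gDens_continuous.intervalIntegrable _ _)
    (fun s hs => gDens_anti (hu.trans hs.1) hs.2)
  simpa using this

lemma gTail_nonneg (x : ℝ) : 0 ≤ gTail x := ENNReal.toReal_nonneg

/-- Lower Mills-ratio bound, obtained from the mass of `(x, x + 1/(1+x)]`. -/
lemma gTail_lower {x : ℝ} (hx : 0 ≤ x) : gDens x ≤ exp 2 * ((1 + x) * gTail x) := by
  have h1x : 0 < 1 + x := by linarith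
  set t := 1 / (1 + x) with ht
  have ht0 : 0 < t := by positivity
  have ht1 : t ≤ 1 := by rw [ht, div_le_one h1x]; linarith
  have htx : t * (1 + x) = 1 := by rw [ht]; field_simp
  have h := le_gTail_sub hx (by linarith : x ≤ x + t)
  have h0 := gTail_nonneg (x + t)
  rw [gDens_add] at h
  have h2 : exp (-2) ≤ exp (-(t * x + t ^ 2 / 2)) := by
    apply exp_le_exp.2
    nlinarith
  have hd := gDens_pos x
  have h3 : t * (gDens x * exp (-2)) ≤ gTail x := by
    have : t * (gDens x * exp (-2)) ≤ t * (gDens x * exp (-(t * x + t ^ 2 / 2))) := by gcongr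
    nlinarith
  have h4 : exp 2 * exp (-2) = 1 := by rw [← exp_add]; simp
  calc gDens x = exp 2 * ((1 + x) * (t * (gDens x * exp (-2)))) := by
        linear_combination (-(gDens x)) * htx * exp 2 * exp (-2) - gDens x * h4
    _ ≤ _ := by gcongr

lemma gTail_pos {x : ℝ} (hx : 0 ≤ x) : 0 < gTail x := by
  have h := gTail_lower hx
  have hd := gDens_pos x
  by_contra hc
  have : gTail x = 0 := le_antisymm (not_lt.1 hc) (gTail_nonneg x)
  rw [this] at h; simp at h; linarith

lemma gTail_anti {x y : ℝ} (h : x ≤ y) : gTail y ≤ gTail x := by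
  unfold gTail
  exact ENNReal.toReal_mono (measure_ne_top _ _) (measure_mono (Set.Ioi_subset_Ioi h))

/-- Chernoff bound for the Gaussian tail. -/
lemma gTail_upper {x : ℝ} (hx : 0 ≤ x) : gTail x ≤ exp (-x ^ 2 / 2) := by
  have := measure_ge_le_exp_mul_mgf (μ := gaussianReal 0 1) (X := id) x hx
    (integrable_exp_mul_gaussianReal x)
  rw [mgf_id_gaussianReal, ← exp_add] at this
  have h2 : gTail x ≤ (gaussianReal 0 1).real {ω | x ≤ id ω} := by
    unfold gTail
    exact ENNReal.toReal_mono (measure_ne_top _ _) (measure_mono fun y (hy : x < y) => hy.le)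
  refine (h2.trans this).trans (exp_le_exp.2 ?_)
  simp; nlinarith

lemma gTail_zero : gTail 0 = 1 / 2 := by
  have h1 : gaussianReal 0 1 (Set.Iio (0:ℝ)) = gaussianReal 0 1 (Set.Ioi (0:ℝ)) := by
    have := gaussianReal_map_neg (μ := 0) (v := 1)
    rw [neg_zero] at this
    conv_lhs => rw [← this, Measure.map_apply measurable_neg measurableSet_Iio]
    congr 1; ext; simp
  have : NullSingletonClass (gaussianReal 0 1) := nullSingletonClass_gaussianReal one_ne_zero
  have h2 : gaussianReal 0 1 (Set.Iic (0:ℝ)) = gaussianReal 0 1 (Set.Iio (0:ℝ)) :=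
    measure_congr Iio_ae_eq_Iic.symm
  have h3 := measure_add_measure_compl (μ := gaussianReal 0 1) (measurableSet_Ioi (a := (0:ℝ)))
  rw [Set.compl_Ioi, h2, h1, measure_univ] at h3
  have h4 := congrArg ENNReal.toReal h3
  rw [ENNReal.toReal_add (measure_ne_top _ _) (measure_ne_top _ _)] at h4
  unfold gTail; simp at h4 ⊢; linarith

/-! ### Cell-by-cell comparison with the Gaussian -/

lemma abs_exp_sub_one_le_mul (y : ℝ) : |exp y - 1| ≤ |y| * exp |y| := by
  rcases le_total 0 y with h | h
  · rw [abs_of_nonneg h, abs_of_nonneg (by linarith [add_one_le_exp y])]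
    have h1 := add_one_le_exp (-y)
    have h2 : exp y * exp (-y) = 1 := by rw [← exp_add]; simp
    nlinarith [exp_pos y]
  · rw [abs_of_nonpos h, abs_of_nonpos (by linarith [exp_le_one_iff.2 h])]
    have h1 := add_one_le_exp y
    have h3 : 1 ≤ exp (-y) := one_le_exp (by linarith)
    nlinarith

/-- The polynomial factor `1 + v³` at `v = x + y` is absorbed by the Gaussian decay away from `x`,
leaving an exponential of rate proportional to `1 + x`. -/
lemma cube_mul_exp_le {x y : ℝ} (hx : 0 ≤ x) (hy : 0 ≤ y) :
    (1 + (x + y) ^ 3) * exp (-((x + y) ^ 2 - x ^ 2) / 4) ≤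
      2048 * (1 + x ^ 3) * exp (-((1 + x) * y / 2)) := by
  have h1 : 1 + (x + y) ^ 3 ≤ 4 * (1 + x ^ 3) * (1 + y ^ 3) := by
    have : 0 ≤ (x + y) * (x - y) ^ 2 := by positivity
    have h3 : 0 ≤ x ^ 3 * y ^ 3 := by positivity
    have hx3 : 0 ≤ x ^ 3 := by positivity
    nlinarith
  have h2 : 1 + y ^ 3 ≤ 128 * exp (y ^ 2 / 8) := by
    have := quadratic_le_exp_of_nonneg (x := y ^ 2 / 8) (by positivity)
    nlinarith [sq_nonneg (y ^ 2 - y), sq_nonneg y, sq_nonneg (y ^ 2)]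
  have h3 : exp (y ^ 2 / 8) * exp (-((x + y) ^ 2 - x ^ 2) / 4) ≤
      exp (1 / 2) * exp (-((1 + x) * y / 2)) := by
    rw [← exp_add, ← exp_add]
    apply exp_le_exp.2
    nlinarith [sq_nonneg (y - 2)]
  have h4 : exp (1 / 2) ≤ 4 := by
    have := exp_one_lt_d9
    have := exp_le_exp.2 (by norm_num : (1 / 2 : ℝ) ≤ 1)
    linarith
  have hx3 : 0 ≤ x ^ 3 := by positivity
  calc (1 + (x + y) ^ 3) * exp (-((x + y) ^ 2 - x ^ 2) / 4)
      ≤ 4 * (1 + x ^ 3) * (128 * exp (y ^ 2 / 8)) * exp (-((x + y) ^ 2 - x ^ 2) / 4) := by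
        gcongr; refine h1.trans ?_; gcongr
    _ = 512 * (1 + x ^ 3) * (exp (y ^ 2 / 8) * exp (-((x + y) ^ 2 - x ^ 2) / 4)) := by ring
    _ ≤ 512 * (1 + x ^ 3) * (4 * exp (-((1 + x) * y / 2))) := by
        refine mul_le_mul_of_nonneg_left (h3.trans ?_) (by positivity); gcongr
    _ = _ := by ring

lemma mul_le_one_of_cube {x h : ℝ} (hx : 0 ≤ x) (hh : 0 < h) (hh1 : h ≤ 1) (hxh : x ^ 3 * h ≤ 1) :
    x * h ≤ 1 := by
  rcases le_total x 1 with h1 | h1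
  · nlinarith
  · have : x ≤ x ^ 3 := le_self_pow₀ h1 (by norm_num)
    nlinarith

/-- The Riemann sum with step `h` of the exponential `exp (-(1 + x) y / 2)` is of the order
`1 / (1 + x)` of its integral. -/
lemma geom_exp_sum_le {x h : ℝ} (hx : 0 ≤ x) (hh : 0 < h) (hh1 : h ≤ 1) (hxh : x ^ 3 * h ≤ 1)
    (N : ℕ) : ∑ j ∈ Finset.range N, h * exp (-((1 + x) * (j * h) / 2)) ≤ 4 / (1 + x) := by
  set t := (1 + x) * h / 2 with ht
  have ht0 : 0 < t := by positivity
  have hxh' := mul_le_one_of_cube hx hh hh1 hxh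
  have ht1 : t ≤ 1 := by rw [ht]; nlinarith
  have hr1 : exp (-t) < 1 := by rw [Real.exp_lt_one_iff]; linarith
  have e1 : ∀ j : ℕ, h * exp (-((1 + x) * (j * h) / 2)) = h * exp (-t) ^ j := by
    intro j; rw [← exp_nat_mul]; congr 2; rw [ht]; ring
  rw [Finset.sum_congr rfl fun j _ => e1 j, ← Finset.mul_sum]
  have e2 : ∑ j ∈ Finset.range N, exp (-t) ^ j ≤ 1 / (1 - exp (-t)) := by
    have := (summable_geometric_of_lt_one (exp_pos (-t)).le hr1).sum_le_tsum (Finset.range N)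
      (fun i _ => by positivity)
    rwa [tsum_geometric_of_lt_one (exp_pos (-t)).le hr1, ← one_div] at this
  have e3 : t / 2 ≤ 1 - exp (-t) := by
    have h1 := add_one_le_exp t
    have h2 : exp t * exp (-t) = 1 := by rw [← exp_add]; simp
    have h3 := exp_pos (-t)
    nlinarith
  calc h * _ ≤ h * (1 / (t / 2)) := by
        gcongr; exact e2.trans (one_div_le_one_div_of_le (by positivity) e3)
    _ = 4 / (1 + x) := by rw [ht]; field_simp; norm_num

/-- Polynomial-versus-exponential comparison: quantities of size `exp (-η / h ^ 2)` are negligible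
relative to `(1 + x³) h * gTail x` in the moderate range `x³ h ≤ 1`. -/
lemma exp_small {η : ℝ} (hη : 0 < η) : ∃ C h0 : ℝ, 0 < C ∧ 0 < h0 ∧ ∀ h x : ℝ, 0 < h → h ≤ h0 →
    0 ≤ x → x ^ 3 * h ≤ 1 → exp (-(η / h ^ 2)) ≤ C * (1 + x ^ 3) * h * gTail x := by
  refine ⟨exp 2 * 2 * (√(2 * π)) * (2 / η), min 1 (√η * √η * √η), by positivity, by positivity, ?_⟩
  intro h x hh hh0 hx hxh
  have hh1 : h ≤ 1 := hh0.trans (min_le_left _ _)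
  have hh2 : h ≤ √η * √η * √η := hh0.trans (min_le_right _ _)
  have hs : √η * √η = η := mul_self_sqrt hη.le
  have hs0 : 0 < √η := sqrt_pos.2 hη
  -- in the moderate range `x` is at most of order `h ^ (-1/3)`, well below `√η / h`
  have hxs : x * h ≤ √η := by
    by_contra hc
    push Not at hc
    have h1 : √η ^ 3 < (x * h) ^ 3 := by gcongr
    have h2 : (x * h) ^ 3 = x ^ 3 * h * h ^ 2 := by ring
    have h3 : x ^ 3 * h * h ^ 2 ≤ 1 * h ^ 2 := by gcongr
    nlinarith
  have hx2 : x ^ 2 / 2 ≤ η / (2 * h ^ 2) := by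
    rw [div_le_div_iff₀ (by positivity) (by positivity)]
    have : (x * h) ^ 2 ≤ √η ^ 2 := by gcongr
    rw [sq_sqrt hη.le] at this
    nlinarith
  have e1 : exp (-(η / h ^ 2)) ≤ exp (-(η / (2 * h ^ 2))) * exp (-x ^ 2 / 2) := by
    rw [← exp_add]; apply exp_le_exp.2
    have : η / h ^ 2 = η / (2 * h ^ 2) + η / (2 * h ^ 2) := by field_simp; ring
    rw [this]; linarith
  have e2 : exp (-(η / (2 * h ^ 2))) ≤ (2 / η) * h := by
    have h1 := add_one_le_exp (η / (2 * h ^ 2))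
    have h2 : 0 < η / (2 * h ^ 2) := by positivity
    rw [exp_neg]
    calc (exp (η / (2 * h ^ 2)))⁻¹ ≤ (η / (2 * h ^ 2))⁻¹ := by gcongr; linarith
      _ = 2 / η * (h * h) := by field_simp
      _ ≤ 2 / η * (h * 1) := by gcongr
      _ = _ := by ring
  have e3 : exp (-x ^ 2 / 2) = √(2 * π) * gDens x := by
    unfold gDens; field_simp
  have e4 := gTail_lower hx
  have e5 : 1 + x ≤ 2 * (1 + x ^ 3) := by nlinarith [mul_nonneg hx (sq_nonneg (x - 1)), sq_nonneg (x - 1)]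
  have hG := gTail_nonneg x
  calc exp (-(η / h ^ 2)) ≤ exp (-(η / (2 * h ^ 2))) * exp (-x ^ 2 / 2) := e1
    _ ≤ (2 / η) * h * (√(2 * π) * (exp 2 * ((2 * (1 + x ^ 3)) * gTail x))) := by
        rw [e3]
        have e6 : gDens x ≤ exp 2 * ((2 * (1 + x ^ 3)) * gTail x) := by
          refine e4.trans ?_; gcongr
        have := gDens_pos x
        gcongr
    _ = _ := by ring

/-- Comparison of a single weight with the Gaussian mass of its cell. The factor
`exp (O((1 + v³) h))` costs at most half of the Gaussian decay between `x` and `v`, because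
`v ≤ δ / h` and `D δ ≤ 1 / 6`. -/
lemma cell_compare {D δ h x v y : ℝ} (hD : 0 < D) (hDδ : D * δ ≤ 1 / 6)
    (hh : 0 < h) (hh1' : h ≤ 1) (hx : 0 ≤ x) (hxh : x ^ 3 * h ≤ 1) (hxv' : x ≤ v)
    (hvδ : v ≤ δ / h) (hy : |y| ≤ D * (1 + v ^ 3) * h) :
    |h * gDens v * exp y - (gTail v - gTail (v + h))| ≤
      (D + 2) * exp (2 * D) * 2048 * (1 + x ^ 3) * h * gDens x *
        (h * exp (-((1 + x) * (v - x) / 2))) := by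
  have hx3 : 0 ≤ x ^ 3 := by positivity
  have hdx := gDens_pos x
  have hv0' : 0 ≤ v := hx.trans hxv'
  have hup := gTail_sub_le hv0' (by linarith : v ≤ v + h)
  have hdn := le_gTail_sub hv0' (by linarith : v ≤ v + h)
  rw [gDens_add] at hdn
  have hdv := gDens_pos v
  have hv3 : 0 ≤ v ^ 3 := by positivity
  have hvv : v ≤ 1 + v ^ 3 := by nlinarith [mul_nonneg hv0' (sq_nonneg (v - 1)), sq_nonneg (v - 1)]
  set Y := D * (1 + v ^ 3) * h with hY
  have hY0 : 0 ≤ Y := by positivity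
  have a1 : |h * gDens v * exp y - h * gDens v| ≤ h * gDens v * (Y * exp Y) := by
    have : h * gDens v * exp y - h * gDens v = h * gDens v * (exp y - 1) := by ring
    rw [this, abs_mul, abs_of_nonneg (by positivity)]
    gcongr
    refine (abs_exp_sub_one_le_mul y).trans ?_
    gcongr
  have a2 : |h * gDens v - (gTail v - gTail (v + h))| ≤ h * gDens v * (2 * (1 + v ^ 3) * h) := by
    have f1 := add_one_le_exp (-(h * v + h ^ 2 / 2))
    have f2 : 0 ≤ h * gDens v := by positivity
    have f3 : h * v + h ^ 2 / 2 ≤ 2 * (1 + v ^ 3) * h := by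
      have f4 : h * v ≤ h * (1 + v ^ 3) := by gcongr
      have f5 : h * h ≤ h * 1 := by gcongr
      have f6 : 0 ≤ h * v ^ 3 := by positivity
      nlinarith only [f4, f5, f6, hh]
    rw [abs_le]
    constructor
    · have : 0 ≤ h * gDens v * (2 * (1 + v ^ 3) * h) := by positivity
      have e : v + h - v = h := by ring
      rw [e] at hup; linarith
    · have e : v + h - v = h := by ring
      rw [e] at hdn
      have f7 : h * gDens v * (-(h * v + h ^ 2 / 2) + 1) ≤
          h * gDens v * exp (-(h * v + h ^ 2 / 2)) := by gcongr
      have f8 : h * gDens v * (h * v + h ^ 2 / 2) ≤ h * gDens v * (2 * (1 + v ^ 3) * h) := by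
        gcongr
      linarith
  -- the exponential of the error is controlled by half of the Gaussian decay beyond `x`
  have a3 : Y ≤ 2 * D + (v ^ 2 - x ^ 2) / 4 := by
    have g1 : v ^ 3 - x ^ 3 ≤ 3 / 2 * v * (v ^ 2 - x ^ 2) := by
      nlinarith [mul_nonneg (sub_nonneg.2 hxv') (mul_nonneg hv0' (sub_nonneg.2 hxv')),
        mul_nonneg (sub_nonneg.2 hxv') (mul_nonneg hx (sub_nonneg.2 hxv')), mul_nonneg (sub_nonneg.2 hxv') (sq_nonneg x),
        mul_nonneg (sub_nonneg.2 hxv') (mul_nonneg hx hv0')]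
    have g2 : v * h ≤ δ := by rwa [le_div_iff₀ hh] at hvδ
    have g3 : 0 ≤ v ^ 2 - x ^ 2 := by nlinarith
    have g4 : h * (v ^ 3 - x ^ 3) ≤ 3 / 2 * δ * (v ^ 2 - x ^ 2) := by
      calc h * (v ^ 3 - x ^ 3) ≤ h * (3 / 2 * v * (v ^ 2 - x ^ 2)) := by gcongr
        _ = 3 / 2 * (v * h) * (v ^ 2 - x ^ 2) := by ring
        _ ≤ _ := by gcongr
    have g5 : D * (h * (v ^ 3 - x ^ 3)) ≤ (v ^ 2 - x ^ 2) / 4 := by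
      calc D * (h * (v ^ 3 - x ^ 3)) ≤ D * (3 / 2 * δ * (v ^ 2 - x ^ 2)) := by gcongr
        _ = (D * δ) * (3 / 2 * (v ^ 2 - x ^ 2)) := by ring
        _ ≤ (1 / 6) * (3 / 2 * (v ^ 2 - x ^ 2)) := by gcongr
        _ = _ := by ring
    have g6 : D * h ≤ D * 1 := by gcongr
    have g7 : D * (x ^ 3 * h) ≤ D * 1 := by gcongr
    have : Y = D * h + D * (x ^ 3 * h) + D * (h * (v ^ 3 - x ^ 3)) := by rw [hY]; ring
    linarith
  have a4 : gDens v * exp Y ≤ gDens x * exp (2 * D) * exp (-(v ^ 2 - x ^ 2) / 4) := by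
    unfold gDens
    rw [mul_assoc, mul_assoc, mul_assoc, ← exp_add, ← exp_add, ← exp_add]
    refine mul_le_mul_of_nonneg_left (exp_le_exp.2 ?_) (by positivity)
    linarith
  have a5 := cube_mul_exp_le hx (sub_nonneg.2 hxv')
  rw [add_sub_cancel] at a5
  have hexpY : 1 ≤ exp Y := one_le_exp hY0
  calc |h * gDens v * exp y - (gTail v - gTail (v + h))|
      ≤ h * gDens v * (Y * exp Y) + h * gDens v * (2 * (1 + v ^ 3) * h) := by
        refine le_trans ?_ (add_le_add a1 a2)
        exact abs_sub_le _ _ _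
    _ ≤ h * gDens v * (Y * exp Y) + h * gDens v * (2 * (1 + v ^ 3) * h * exp Y) := by
        have : 2 * (1 + v ^ 3) * h ≤ 2 * (1 + v ^ 3) * h * exp Y :=
          le_mul_of_one_le_right (by positivity) hexpY
        gcongr h * gDens v * (Y * exp Y) + h * gDens v * ?_
    _ = (D + 2) * h * h * (1 + v ^ 3) * (gDens v * exp Y) := by rw [hY]; ring
    _ ≤ (D + 2) * h * h * (1 + v ^ 3) * (gDens x * exp (2 * D) * exp (-(v ^ 2 - x ^ 2) / 4)) := by
        gcongr
    _ = (D + 2) * h * h * gDens x * exp (2 * D) * ((1 + v ^ 3) * exp (-(v ^ 2 - x ^ 2) / 4)) := by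
        ring
    _ ≤ (D + 2) * h * h * gDens x * exp (2 * D) *
          (2048 * (1 + x ^ 3) * exp (-((1 + x) * (v - x) / 2))) := by
        gcongr
    _ = _ := by ring

/-- One-sided Riemann-sum comparison with relative precision. If the weights `b j` agree with
`h * gDens` on the grid `v₀ + j h` starting next to `x`, up to a factor `exp (O((1 + v³) h))`, and
the grid extends past `δ / h`, then their sum is `gTail x` up to a relative error
`O((1 + x³) h)`. -/
lemma one_sided_sum {D δ : ℝ} (hD : 0 < D) (hδ : 0 < δ) (hDδ : D * δ ≤ 1 / 6) :
    ∃ C h0 : ℝ, 0 < C ∧ 0 < h0 ∧ ∀ h x v0 : ℝ, 0 < h → h ≤ h0 → 0 ≤ x → x ^ 3 * h ≤ 1 →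
      x ≤ v0 → v0 ≤ x + h → ∀ (N : ℕ) (b : ℕ → ℝ),
      (∀ j < N, v0 + j * h ≤ δ / h ∧ ∃ y, |y| ≤ D * (1 + (v0 + j * h) ^ 3) * h ∧
        b j = h * gDens (v0 + j * h) * exp y) →
      δ / h ≤ v0 + N * h →
      |∑ j ∈ Finset.range N, b j - gTail x| ≤ C * (1 + x ^ 3) * h * gTail x := by
  obtain ⟨C1, h1, hC1, hh1, key⟩ := exp_small (η := δ ^ 2 / 2) (by positivity)
  set B := (D + 2) * exp (2 * D) * 2048 with hB
  have hB0 : 0 < B := by positivity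
  refine ⟨C1 + 2 * exp 2 + B * 4 * exp 2, min 1 h1, by positivity, by positivity, ?_⟩
  intro h x v0 hh hh0 hx hxh hxv hvx N b hb hN
  have hh1' : h ≤ 1 := hh0.trans (min_le_left _ _)
  have hG := gTail_nonneg x
  have hlow := gTail_lower hx
  have hv0 : 0 ≤ v0 := hx.trans hxv
  have hx3 : 0 ≤ x ^ 3 := by positivity
  have e5 : 1 + x ≤ 2 * (1 + x ^ 3) := by nlinarith [mul_nonneg hx (sq_nonneg (x - 1)), sq_nonneg (x - 1)]
  have hdx := gDens_pos x
  -- the far end of the grid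
  have hend : gTail (v0 + N * h) ≤ C1 * (1 + x ^ 3) * h * gTail x := by
    refine le_trans ?_ (key h x hh (hh0.trans (min_le_right _ _)) hx hxh)
    refine (gTail_anti hN).trans ((gTail_upper (by positivity)).trans (exp_le_exp.2 ?_))
    rw [div_pow]; apply le_of_eq; ring
  -- the first, incomplete cell
  have hstart : gTail x - gTail v0 ≤ 2 * exp 2 * (1 + x ^ 3) * h * gTail x := by
    calc gTail x - gTail v0 ≤ (v0 - x) * gDens x := gTail_sub_le hx hxv
      _ ≤ h * (exp 2 * ((2 * (1 + x ^ 3)) * gTail x)) := by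
          gcongr
          · linarith
          · refine hlow.trans ?_; gcongr
      _ = _ := by ring
  have hstart0 : 0 ≤ gTail x - gTail v0 := by linarith [gTail_anti hxv]
  have hend0 := gTail_nonneg (v0 + N * h)
  have htel : ∑ j ∈ Finset.range N, (gTail (v0 + j * h) - gTail (v0 + (j + 1 : ℕ) * h)) =
      gTail v0 - gTail (v0 + N * h) := by
    have := Finset.sum_range_sub' (fun j : ℕ => gTail (v0 + j * h)) N
    simpa using this
  have hcell : ∀ j ∈ Finset.range N,
      |b j - (gTail (v0 + j * h) - gTail (v0 + (j + 1 : ℕ) * h))| ≤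
        B * (1 + x ^ 3) * h * gDens x * (h * exp (-((1 + x) * (j * h) / 2))) := by
    intro j hj
    obtain ⟨hvδ, y, hy, hby⟩ := hb j (Finset.mem_range.1 hj)
    set v := v0 + j * h with hv
    have hxv' : x ≤ v := by
      have : (0 : ℝ) ≤ j * h := by positivity
      rw [hv]; linarith
    have hv1 : v0 + (j + 1 : ℕ) * h = v + h := by rw [hv]; push_cast; ring
    rw [hv1, hby]
    refine (cell_compare hD hDδ hh hh1' hx hxh hxv' hvδ hy).trans ?_
    have : j * h ≤ v - x := by rw [hv]; linarith
    gcongr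
  have hsum : |∑ j ∈ Finset.range N, b j - (gTail v0 - gTail (v0 + N * h))| ≤
      B * 4 * exp 2 * (1 + x ^ 3) * h * gTail x := by
    rw [← htel, ← Finset.sum_sub_distrib]
    refine (Finset.abs_sum_le_sum_abs _ _).trans ((Finset.sum_le_sum hcell).trans ?_)
    rw [← Finset.mul_sum]
    calc _ ≤ B * (1 + x ^ 3) * h * gDens x * (4 / (1 + x)) := by
          gcongr; exact geom_exp_sum_le hx hh hh1' hxh N
      _ ≤ B * (1 + x ^ 3) * h * (exp 2 * ((1 + x) * gTail x)) * (4 / (1 + x)) := by gcongr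
      _ = _ := by field_simp
  rw [abs_le] at hsum ⊢
  constructor <;> nlinarith

/-! ### Binomial coefficients -/

/-- The upper Stirling bound: `log (stirlingSeq n) - 1 / (12 n)` increases to `log √π`. -/
lemma log_stirlingSeq_le {n : ℕ} (hn : n ≠ 0) :
    log (Stirling.stirlingSeq n) ≤ log √π + 1 / (12 * n) := by
  obtain ⟨k, rfl⟩ := Nat.exists_eq_succ_of_ne_zero hn
  set f : ℕ → ℝ := fun k => log (Stirling.stirlingSeq (k + 1)) - 1 / (12 * ((k + 1 : ℕ) : ℝ)) with hf
  have hmono : Monotone f := by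
    refine monotone_nat_of_le_succ fun j => ?_
    have h1 := Stirling.log_stirlingSeq_sdiff_le (j + 1)
    have h2 : (1 : ℝ) / (12 * (j + 1 : ℕ) * ((j + 1 : ℕ) + 1)) =
        1 / (12 * ((j + 1 : ℕ) : ℝ)) - 1 / (12 * ((j + 1 + 1 : ℕ) : ℝ)) := by
      push_cast; field_simp; ring
    simp only [hf]; linarith
  have hlim : Tendsto f atTop (nhds (log √π)) := by
    have h1 : Tendsto (fun k : ℕ => log (Stirling.stirlingSeq (k + 1))) atTop (nhds (log √π)) :=
      ((continuousAt_log (by positivity)).tendsto.comp Stirling.tendsto_stirlingSeq_sqrt_pi).comp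
        (tendsto_add_atTop_nat 1)
    have h2 : Tendsto (fun k : ℕ => 1 / (12 * ((k + 1 : ℕ) : ℝ))) atTop (nhds 0) := by
      have h3 : Tendsto (fun k : ℕ => ((k + 1 : ℕ) : ℝ)) atTop atTop :=
        tendsto_natCast_atTop_atTop.comp (tendsto_add_atTop_nat 1)
      exact tendsto_const_nhds.div_atTop (h3.const_mul_atTop (by norm_num))
    have h4 := h1.sub h2
    rwa [sub_zero] at h4
  have := hmono.ge_of_tendsto hlim k
  simp only [hf] at this
  simp only [Nat.succ_eq_add_one]
  linarith

/-- Two-sided Stirling formula with an explicit `O(1/n)` remainder. -/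
lemma log_factorial_eq {n : ℕ} (hn : n ≠ 0) : ∃ r : ℝ, 0 ≤ r ∧ r ≤ 1 / n ∧
    log (n.factorial : ℝ) = n * log n - n + log n / 2 + log (2 * π) / 2 + r := by
  have hn0 : (0 : ℝ) < n := by exact_mod_cast Nat.pos_of_ne_zero hn
  refine ⟨log (Stirling.stirlingSeq n) - log √π, ?_, ?_, ?_⟩
  · have := log_le_log (by positivity) (Stirling.sqrt_pi_le_stirlingSeq hn)
    linarith
  · have := log_stirlingSeq_le hn
    have h2 : (1 : ℝ) / (12 * n) ≤ 1 / n := by gcongr; linarith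
    linarith
  · rw [Stirling.log_stirlingSeq_formula, log_sqrt pi_pos.le, log_mul two_ne_zero hn0.ne',
      log_div hn0.ne' (exp_ne_zero _), log_exp, log_mul two_ne_zero pi_ne_zero]
    ring

/-- Local form of the binomial coefficient: entropy, the `(1 - m²)` prefactor, and an `O(1/n)`
remainder, at magnetization `m = 2k/n - 1`. -/
lemma log_choose_eq {n k : ℕ} (hk : 0 < k) (hkn : k < n) {m : ℝ} (hm : (k : ℝ) = n * ((1 + m) / 2)) :
    ∃ r : ℝ, |r| ≤ 1 / n + (1 / (n * ((1 + m) / 2)) + 1 / (n * ((1 - m) / 2))) ∧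
      log (n.choose k : ℝ) = -(n * binEnt m) + log (2 / (π * n)) / 2 - log (1 - m ^ 2) / 2 + r := by
  obtain ⟨l, rfl⟩ := Nat.exists_eq_add_of_lt hkn
  set n := k + l + 1 with hn
  set q := l + 1 with hq
  have hnkq : n = k + q := by omega
  have hn0 : (0 : ℝ) < n := by positivity
  have hk0 : (0 : ℝ) < k := by exact_mod_cast hk
  have hq0 : (0 : ℝ) < q := by positivity
  have hqm : (q : ℝ) = n * ((1 - m) / 2) := by
    have : (n : ℝ) = k + q := by exact_mod_cast hnkq
    nlinarith
  have hp1 : 0 < (1 + m) / 2 := by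
    by_contra hc
    have : (n : ℝ) * ((1 + m) / 2) ≤ 0 := mul_nonpos_of_nonneg_of_nonpos hn0.le (not_lt.1 hc)
    linarith
  have hp2 : 0 < (1 - m) / 2 := by
    by_contra hc
    have : (n : ℝ) * ((1 - m) / 2) ≤ 0 := mul_nonpos_of_nonneg_of_nonpos hn0.le (not_lt.1 hc)
    linarith
  obtain ⟨r1, h10, h11, e1⟩ := log_factorial_eq (n := n) (by omega)
  obtain ⟨r2, h20, h21, e2⟩ := log_factorial_eq (n := k) (by omega)
  obtain ⟨r3, h30, h31, e3⟩ := log_factorial_eq (n := q) (by omega)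
  refine ⟨r1 - r2 - r3, ?_, ?_⟩
  · rw [← hm, ← hqm, abs_le]
    have : (0:ℝ) < 1 / n := by positivity
    have : (0:ℝ) < 1 / k := by positivity
    have : (0:ℝ) < 1 / q := by positivity
    constructor <;> linarith
  · have hc : (n.choose k : ℝ) * k.factorial * q.factorial = n.factorial := by
      have := Nat.choose_mul_factorial_mul_factorial (n := n) (k := k) (by omega)
      rw [show n - k = q by omega] at this
      exact_mod_cast this
    have hc0 : (n.choose k : ℝ) ≠ 0 := by
      have := Nat.choose_pos (n := n) (k := k) (by omega)
      positivity
    have e4 := congrArg log hc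
    rw [log_mul (by positivity) (by positivity), log_mul hc0 (by positivity), e1, e2, e3] at e4
    have lk : log (k : ℝ) = log n + log ((1 + m) / 2) := by
      rw [hm, log_mul hn0.ne' hp1.ne']
    have lq : log (q : ℝ) = log n + log ((1 - m) / 2) := by
      rw [hqm, log_mul hn0.ne' hp2.ne']
    have lm : log (1 - m ^ 2) = log ((1 + m) / 2) + log ((1 - m) / 2) + 2 * log 2 := by
      rw [show 1 - m ^ 2 = ((1 + m) / 2) * ((1 - m) / 2) * (2 * 2) by ring,
        log_mul (by positivity) (by positivity), log_mul hp1.ne' hp2.ne',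
        log_mul two_ne_zero two_ne_zero]
      ring
    rw [log_div two_ne_zero (by positivity), log_mul pi_ne_zero hn0.ne', lm]
    rw [lk, lq, log_mul two_ne_zero pi_ne_zero] at e4
    have hkq : (n : ℝ) = k + q := by exact_mod_cast hnkq
    unfold binEnt
    have hlog : log (n.choose k : ℝ) = n * log n - n + log n / 2
        - (k * (log n + log ((1 + m) / 2)) - k + (log n + log ((1 + m) / 2)) / 2)
        - (q * (log n + log ((1 - m) / 2)) - q + (log n + log ((1 - m) / 2)) / 2)
        - (log 2 + log π) / 2 + (r1 - r2 - r3) := by linarith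
    rw [hlog]
    linear_combination (log n - 1) * hkq - log ((1 + m) / 2) * hm - log ((1 - m) / 2) * hqm

/-- Chernoff bound `C(n,k) ≤ exp (-n I(m))`, a single term of the binomial expansion at `p = k/n`;
the endpoints `k = 0, n` are covered by `0 * log 0 = 0`. -/
lemma choose_le_exp {n k : ℕ} (hn : 0 < n) (hkn : k ≤ n) {m : ℝ}
    (hm : (k : ℝ) = n * ((1 + m) / 2)) : (n.choose k : ℝ) ≤ exp (-(n * binEnt m)) := by
  have hn0 : (0 : ℝ) < n := by exact_mod_cast hn
  set p := (1 + m) / 2 with hp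
  have hq : (1 - m) / 2 = 1 - p := by rw [hp]; ring
  have hp0 : 0 ≤ p := by
    by_contra hc
    have : (n : ℝ) * p < 0 := mul_neg_of_pos_of_neg hn0 (not_le.1 hc)
    have : (0:ℝ) ≤ k := by positivity
    linarith
  have hkn' : (k : ℝ) ≤ n := by exact_mod_cast hkn
  have hp1 : 0 ≤ 1 - p := by
    by_contra hc
    have : (n : ℝ) * (1 - p) < 0 := mul_neg_of_pos_of_neg hn0 (not_le.1 hc)
    linarith
  have key : ∀ (j : ℕ) (t : ℝ), 0 ≤ t → (j : ℝ) = n * t → t ^ j = exp (j * log t) := by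
    intro j t ht hj
    rcases ht.eq_or_lt with h0 | h0
    · subst h0
      have : j = 0 := by simpa using hj
      simp [this]
    · rw [mul_comm, exp_mul, exp_log h0, rpow_natCast]
  have e1 := key k p hp0 hm
  have e2 := key (n - k) (1 - p) hp1 (by rw [Nat.cast_sub hkn]; linarith)
  have hsum : p ^ k * (1 - p) ^ (n - k) * n.choose k ≤ 1 := by
    have h := add_pow p (1 - p) n
    rw [show p + (1 - p) = 1 by ring, one_pow] at h
    refine le_of_le_of_eq ?_ h.symm
    exact Finset.single_le_sum (f := fun i => p ^ i * (1 - p) ^ (n - i) * (n.choose i : ℝ))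
      (fun i _ => by positivity) (Finset.mem_range.2 (by omega))
  rw [e1, e2, ← exp_add] at hsum
  have e3 : (k * log p + (n - k : ℕ) * log (1 - p) : ℝ) = n * binEnt m := by
    unfold binEnt
    rw [← hp, hq, Nat.cast_sub hkn, hm]; ring
  rw [e3] at hsum
  rw [exp_neg, ← one_div, le_div_iff₀ (exp_pos _)]
  linarith

/-! ### The function `φ` around and away from its minimizer -/

lemma binEnt_continuous : Continuous binEnt := by
  unfold binEnt
  have h := continuous_mul_log
  exact (h.comp (by fun_prop : Continuous fun m : ℝ => (1 - m) / 2)).add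
    (h.comp (by fun_prop : Continuous fun m : ℝ => (1 + m) / 2))

lemma phiKJ_continuous (K J : ℝ) : Continuous (phiKJ K J) := by
  unfold phiKJ
  have := binEnt_continuous
  fun_prop

lemma phiKJ_contDiffOn (K J : ℝ) : ContDiffOn ℝ 3 (phiKJ K J) (Set.Ioo (-1) 1) := by
  intro m hm
  apply ContDiffAt.contDiffWithinAt
  have h1 : (1 - m) / 2 ≠ 0 := by have := hm.2; intro h; linarith
  have h2 : (1 + m) / 2 ≠ 0 := by have := hm.1; intro h; linarith
  unfold phiKJ binEnt
  have := ContDiffAt.log (n := 3) (f := fun m : ℝ => (1 - m) / 2) (x := m) (by fun_prop) h1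
  have := ContDiffAt.log (n := 3) (f := fun m : ℝ => (1 + m) / 2) (x := m) (by fun_prop) h2
  fun_prop

/-- Third-order Taylor estimate for `φ` at its interior minimizer. -/
lemma phiKJ_taylor (K J : ℝ) {mstar : ℝ} (hmem : mstar ∈ Set.Ioo (-1 : ℝ) 1)
    (hmin : ∀ y ∈ Set.Icc (-1 : ℝ) 1, phiKJ K J mstar ≤ phiKJ K J y) :
    ∃ M δ : ℝ, 0 < M ∧ 0 < δ ∧ ∀ m, |m - mstar| ≤ δ →
      |phiKJ K J m - phiKJ K J mstar -
        iteratedDeriv 2 (phiKJ K J) mstar / 2 * (m - mstar) ^ 2| ≤ M * |m - mstar| ^ 3 := by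
  have hT := taylor_isLittleO (n := 3) (convex_Ioo (-1 : ℝ) 1) hmem (phiKJ_contDiffOn K J)
  rw [isOpen_Ioo.nhdsWithin_eq hmem] at hT
  have hd0 : iteratedDerivWithin 1 (phiKJ K J) (Set.Ioo (-1) 1) mstar = 0 := by
    rw [iteratedDerivWithin_of_isOpen isOpen_Ioo hmem, iteratedDeriv_one]
    apply IsLocalMin.deriv_eq_zero
    filter_upwards [Icc_mem_nhds hmem.1 hmem.2] with y hy using hmin y hy
  have hd2 : iteratedDerivWithin 2 (phiKJ K J) (Set.Ioo (-1) 1) mstar =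
      iteratedDeriv 2 (phiKJ K J) mstar := iteratedDerivWithin_of_isOpen isOpen_Ioo hmem
  set c := iteratedDerivWithin 3 (phiKJ K J) (Set.Ioo (-1) 1) mstar with hc
  have hev : ∀ m, taylorWithinEval (phiKJ K J) 3 (Set.Ioo (-1) 1) mstar m =
      phiKJ K J mstar + iteratedDeriv 2 (phiKJ K J) mstar / 2 * (m - mstar) ^ 2
        + c / 6 * (m - mstar) ^ 3 := by
    intro m
    rw [taylorWithinEval_succ, taylorWithinEval_succ, taylorWithinEval_succ, taylor_within_zero_eval]
    simp only [zero_add, hd0, Nat.reduceAdd, hd2, ← hc, smul_eq_mul]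
    norm_num [Nat.factorial]
    ring
  have hb := hT.bound one_pos
  obtain ⟨δ, hδ, hball⟩ := Metric.eventually_nhds_iff.1 hb
  refine ⟨1 + |c / 6|, δ / 2, by positivity, by positivity, fun m hm => ?_⟩
  have := hball (y := m) (by rw [Real.dist_eq]; linarith)
  rw [hev, Real.norm_eq_abs, Real.norm_eq_abs, abs_pow] at this
  have e : phiKJ K J m - phiKJ K J mstar -
        iteratedDeriv 2 (phiKJ K J) mstar / 2 * (m - mstar) ^ 2 =
      (phiKJ K J m - (phiKJ K J mstar + iteratedDeriv 2 (phiKJ K J) mstar / 2 * (m - mstar) ^ 2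
        + c / 6 * (m - mstar) ^ 3)) + c / 6 * (m - mstar) ^ 3 := by ring
  rw [e]
  refine (abs_add_le _ _).trans ?_
  rw [abs_mul, abs_pow]
  linarith

lemma log_one_sub_sq_lipschitz {mstar : ℝ} (hmem : mstar ∈ Set.Ioo (-1 : ℝ) 1) :
    ∃ M δ : ℝ, 0 < M ∧ 0 < δ ∧ ∀ m, |m - mstar| ≤ δ →
      |log (1 - m ^ 2) - log (1 - mstar ^ 2)| ≤ M * |m - mstar| := by
  have h0 : 1 - mstar ^ 2 ≠ 0 := by
    have h1 := hmem.1; have h2 := hmem.2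
    have : 0 < (1 - mstar) * (1 + mstar) := mul_pos (by linarith) (by linarith)
    intro h; nlinarith
  have hd : DifferentiableAt ℝ (fun m : ℝ => log (1 - m ^ 2)) mstar :=
    DifferentiableAt.log (by fun_prop) h0
  obtain ⟨M, hM, hb⟩ := hd.isBigO_sub.exists_pos
  obtain ⟨δ, hδ, hball⟩ := Metric.eventually_nhds_iff.1 hb.bound
  refine ⟨M, δ / 2, hM, by positivity, fun m hm => ?_⟩
  simpa using hball (y := m) (by rw [Real.dist_eq]; linarith)

/-- Strict separation of `φ` from its minimum away from the unique minimizer. -/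
lemma phiKJ_gap (K J : ℝ) {mstar δ : ℝ} (hδ : 0 < δ)
    (hmin : ∀ y ∈ Set.Icc (-1 : ℝ) 1, phiKJ K J mstar ≤ phiKJ K J y)
    (huniq : ∀ y ∈ Set.Icc (-1 : ℝ) 1, phiKJ K J y = phiKJ K J mstar → y = mstar) :
    ∃ η : ℝ, 0 < η ∧ ∀ y ∈ Set.Icc (-1 : ℝ) 1, δ ≤ |y - mstar| →
      phiKJ K J mstar + η ≤ phiKJ K J y := by
  set S := Set.Icc (-1 : ℝ) 1 ∩ {y | δ ≤ |y - mstar|} with hS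
  have hcomp : IsCompact S :=
    isCompact_Icc.inter_right (isClosed_le continuous_const (by fun_prop))
  rcases S.eq_empty_or_nonempty with he | hne
  · refine ⟨1, one_pos, fun y hy hd => ?_⟩
    have : y ∈ S := ⟨hy, hd⟩
    simp [he] at this
  · obtain ⟨z, hz, hzmin⟩ := hcomp.exists_isMinOn hne (phiKJ_continuous K J).continuousOn
    refine ⟨phiKJ K J z - phiKJ K J mstar, ?_, fun y hy hd => ?_⟩
    · rcases (hmin z hz.1).eq_or_lt with h | h
      · have := huniq z hz.1 h.symm
        have h2 : δ ≤ |z - mstar| := hz.2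
        rw [this] at h2; simp at h2; linarith
      · linarith
    · have := hzmin (show y ∈ S from ⟨hy, hd⟩)
      simp at this; linarith

/-! ### Level weights -/

/-- Magnetization of a configuration with `k` plus spins among `n`. -/
noncomputable def lvlMag (n k : ℕ) : ℝ := 2 * k / n - 1

/-- Total Gibbs weight of the configurations with exactly `k` plus spins. -/
noncomputable def lvlWeight (n : ℕ) (K J : ℝ) (k : ℕ) : ℝ :=
  n.choose k * exp (n * (K / 3 * lvlMag n k ^ 3 + J / 2 * lvlMag n k ^ 2))

lemma lvlWeight_nonneg (n : ℕ) (K J : ℝ) (k : ℕ) : 0 ≤ lvlWeight n K J k := by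
  unfold lvlWeight; positivity

lemma natCast_eq_lvlMag {n k : ℕ} (hn : 0 < n) : (k : ℝ) = n * ((1 + lvlMag n k) / 2) := by
  unfold lvlMag; field_simp; ring

/-- Local expansion of the level weights around the minimizer. -/
lemma lvlWeight_near (K J : ℝ) {mstar : ℝ} (hmem : mstar ∈ Set.Ioo (-1 : ℝ) 1)
    (hmin : ∀ y ∈ Set.Icc (-1 : ℝ) 1, phiKJ K J mstar ≤ phiKJ K J y) :
    ∃ D δ : ℝ, 0 < D ∧ 0 < δ ∧ δ < 1 - mstar ∧ δ < 1 + mstar ∧ ∀ n k : ℕ, 0 < n →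
      |lvlMag n k - mstar| ≤ δ → ∃ r : ℝ,
        |r| ≤ D * (1 / n + |lvlMag n k - mstar| + n * |lvlMag n k - mstar| ^ 3) ∧
        lvlWeight n K J k = exp (-(n * phiKJ K J mstar)) *
          exp (log (2 / (π * n)) / 2 - log (1 - mstar ^ 2) / 2) *
          exp (-(n * (iteratedDeriv 2 (phiKJ K J) mstar / 2 * (lvlMag n k - mstar) ^ 2)) + r) := by
  obtain ⟨M1, δ1, hM1, hδ1, H1⟩ := phiKJ_taylor K J hmem hmin
  obtain ⟨M2, δ2, hM2, hδ2, H2⟩ := log_one_sub_sq_lipschitz hmem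
  have ha : 0 < 1 - mstar := by linarith [hmem.2]
  have hb : 0 < 1 + mstar := by linarith [hmem.1]
  set δ := min (min δ1 δ2) (min ((1 - mstar) / 2) ((1 + mstar) / 2)) with hδ
  have hδ0 : 0 < δ := by positivity
  have l1 : δ ≤ δ1 := (min_le_left _ _).trans (min_le_left _ _)
  have l2 : δ ≤ δ2 := (min_le_left _ _).trans (min_le_right _ _)
  have l3 : δ ≤ (1 - mstar) / 2 := (min_le_right _ _).trans (min_le_left _ _)
  have l4 : δ ≤ (1 + mstar) / 2 := (min_le_right _ _).trans (min_le_right _ _)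
  refine ⟨(1 + 4 / (1 + mstar) + 4 / (1 - mstar)) + M2 + M1, δ, by positivity, hδ0, by linarith,
    by linarith, ?_⟩
  intro n k hn hm
  set m := lvlMag n k with hmdef
  have hn0 : (0 : ℝ) < n := by exact_mod_cast hn
  have hkm : (k : ℝ) = n * ((1 + m) / 2) := natCast_eq_lvlMag hn
  have hm' := abs_le.1 hm
  have b1 : (1 + mstar) / 4 ≤ (1 + m) / 2 := by linarith
  have b2 : (1 - mstar) / 4 ≤ (1 - m) / 2 := by linarith
  have hk : 0 < k := by
    have : (0 : ℝ) < k := by rw [hkm]; apply mul_pos hn0; linarith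
    exact_mod_cast this
  have hkn : k < n := by
    have : (k : ℝ) < n := by
      have : 0 < n * ((1 - m) / 2) := by apply mul_pos hn0; linarith
      nlinarith
    exact_mod_cast this
  obtain ⟨r, hr, he⟩ := log_choose_eq hk hkn hkm
  have t1 := H1 m (hm.trans l1)
  have t2 := H2 m (hm.trans l2)
  set v := iteratedDeriv 2 (phiKJ K J) mstar with hv
  set e1 := phiKJ K J m - phiKJ K J mstar - v / 2 * (m - mstar) ^ 2 with he1
  set e2 := log (1 - m ^ 2) - log (1 - mstar ^ 2) with he2
  refine ⟨r - e2 / 2 - n * e1, ?_, ?_⟩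
  · have c1 : 1 / (n * ((1 + m) / 2)) ≤ 4 / (1 + mstar) * (1 / n) := by
      calc 1 / (n * ((1 + m) / 2)) ≤ 1 / (n * ((1 + mstar) / 4)) := by gcongr
        _ = _ := by field_simp
    have c2 : 1 / (n * ((1 - m) / 2)) ≤ 4 / (1 - mstar) * (1 / n) := by
      calc 1 / (n * ((1 - m) / 2)) ≤ 1 / (n * ((1 - mstar) / 4)) := by gcongr
        _ = _ := by field_simp
    have c3 : |n * e1| ≤ n * (M1 * |m - mstar| ^ 3) := by
      rw [abs_mul, abs_of_pos hn0]; gcongr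
    have c4 : |r - e2 / 2 - n * e1| ≤ |r| + |e2| + |n * e1| := by
      have d1 := abs_sub (r - e2 / 2) (n * e1)
      have d2 := abs_sub r (e2 / 2)
      have d3 : |e2 / 2| ≤ |e2| := by rw [abs_div, abs_two]; linarith [abs_nonneg e2]
      linarith
    set A := |m - mstar|
    have hA : 0 ≤ A := abs_nonneg _
    have hA3 : 0 ≤ n * A ^ 3 := by positivity
    have h1n : 0 ≤ 1 / (n : ℝ) := by positivity
    set p := 4 / (1 + mstar)
    set q := 4 / (1 - mstar)
    have hp : 0 ≤ p := by positivity
    have hq : 0 ≤ q := by positivity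
    have := mul_nonneg hp hA
    have := mul_nonneg hq hA
    have := mul_nonneg hp hA3
    have := mul_nonneg hq hA3
    have := mul_nonneg hM2.le h1n
    have := mul_nonneg hM1.le h1n
    have := mul_nonneg hM2.le hA3
    have := mul_nonneg hM1.le hA
    have c5 : (n : ℝ) * (M1 * A ^ 3) = M1 * (n * A ^ 3) := by ring
    rw [c5] at c3
    generalize (n : ℝ) * A ^ 3 = z at *
    generalize 1 / (n : ℝ) = w at *
    linarith
  · have hc0 : (0 : ℝ) < n.choose k := by
      have := Nat.choose_pos hkn.le
      positivity
    unfold lvlWeight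
    rw [← hmdef, ← exp_log hc0, he, ← exp_add, ← exp_add, ← exp_add]
    congr 1
    rw [he2, he1]; unfold phiKJ; ring

/-- Exponential bound for the level weights away from the minimizer. -/
lemma lvlWeight_far {K J mstar δ η : ℝ}
    (hη : ∀ y ∈ Set.Icc (-1 : ℝ) 1, δ ≤ |y - mstar| → phiKJ K J mstar + η ≤ phiKJ K J y)
    {n k : ℕ} (hn : 0 < n) (hkn : k ≤ n) (hd : δ ≤ |lvlMag n k - mstar|) :
    lvlWeight n K J k ≤ exp (-(n * phiKJ K J mstar)) * exp (-(n * η)) := by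
  have hn0 : (0 : ℝ) < n := by exact_mod_cast hn
  have hkm := natCast_eq_lvlMag (k := k) hn
  set m := lvlMag n k with hm
  have hkn' : (k : ℝ) ≤ n := by exact_mod_cast hkn
  have hmI : m ∈ Set.Icc (-1 : ℝ) 1 := by
    rw [hm, lvlMag]
    constructor
    · have : (0 : ℝ) ≤ 2 * k / n := by positivity
      linarith
    · have : 2 * (k : ℝ) / n ≤ 2 := by rw [div_le_iff₀ hn0]; linarith
      linarith
  have h1 := choose_le_exp hn hkn hkm
  have h2 := hη m hmI hd
  unfold lvlWeight
  rw [← hm]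
  calc _ ≤ exp (-(n * binEnt m)) * exp (n * (K / 3 * m ^ 3 + J / 2 * m ^ 2)) := by gcongr
    _ = exp (-(n * phiKJ K J m)) := by rw [← exp_add]; congr 1; unfold phiKJ; ring
    _ ≤ _ := by
      rw [← exp_add]; apply exp_le_exp.2
      nlinarith

/-- Sums over configurations depending only on the total magnetization reduce to sums over the
number of plus spins. -/
lemma sum_config (n : ℕ) (f : ℝ → ℝ) :
    ∑ x : Fin n → Bool, f (totalMag n x) =
      ∑ k ∈ Finset.range (n + 1), (n.choose k : ℝ) * f (2 * k - n) := by
  have h1 : ∀ s : Finset (Fin n), totalMag n (fun i => decide (i ∈ s)) = 2 * s.card - n := by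
    intro s
    unfold totalMag spin
    have : ∀ i : Fin n, (if decide (i ∈ s) = true then (1 : ℝ) else -1) =
        2 * (if i ∈ s then (1 : ℝ) else 0) - 1 := by
      intro i; by_cases h : i ∈ s <;> simp [h]; norm_num
    simp_rw [this, Finset.sum_sub_distrib, ← Finset.mul_sum]
    simp
  let e : Finset (Fin n) ≃ (Fin n → Bool) :=
    { toFun := fun s i => decide (i ∈ s)
      invFun := fun x => Finset.univ.filter fun i => x i = true
      left_inv := fun s => by ext; simp
      right_inv := fun x => by ext; simp }
  rw [← e.sum_comp]
  have h2 : ∀ s : Finset (Fin n), f (totalMag n (e s)) = f (2 * s.card - n) := fun s => by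
    rw [← h1 s]; rfl
  simp_rw [h2]
  have := Finset.sum_powerset_apply_card (fun k : ℕ => f (2 * k - n)) (x := (Finset.univ : Finset (Fin n)))
  simpa using this

lemma lvl_sum {n : ℕ} (hn : 0 < n) (K J : ℝ) (p : ℝ → Prop) [DecidablePred p] :
    ∑ y : Fin n → Bool, (if p (totalMag n y) then cubicWeight n K J y else 0) =
      ∑ k ∈ Finset.range (n + 1), if p (2 * k - n) then lvlWeight n K J k else 0 := by
  have := sum_config n (fun t => if p t then
    exp (n * (K / 3 * (t / n) ^ 3 + J / 2 * (t / n) ^ 2)) else 0)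
  unfold cubicWeight magPP
  rw [this]
  refine Finset.sum_congr rfl fun k _ => ?_
  have hn0 : (n : ℝ) ≠ 0 := by positivity
  have : (2 * (k : ℝ) - n) / n = lvlMag n k := by unfold lvlMag; field_simp
  rw [this]
  split_ifs <;> simp [lvlWeight]

open Classical in
/-- The law of `S_n` under `P_{n,K,J}`, expressed by level weights. -/
lemma cubicProb_eq {n : ℕ} (hn : 0 < n) (K J : ℝ) (p : ℝ → Prop) :
    cubicProb n K J {y | p (totalMag n y)} =
      (∑ k ∈ Finset.range (n + 1), if p (2 * k - n) then lvlWeight n K J k else 0) /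
        ∑ k ∈ Finset.range (n + 1), lvlWeight n K J k := by
  have hw : ∀ y : Fin n → Bool, 0 ≤ cubicWeight n K J y := fun y => (exp_pos _).le
  have hT := lvl_sum hn K J (fun _ => True)
  simp only [if_true] at hT
  rw [← hT, ← lvl_sum hn K J p]
  unfold cubicProb cubicMeasure
  rw [Measure.smul_apply, smul_eq_mul, Measure.finsetSum_apply, ENNReal.toReal_mul,
    ENNReal.toReal_inv, ENNReal.toReal_sum (by simp), ENNReal.toReal_sum, div_eq_inv_mul]
  · congr 1
    · congr 1
      exact Finset.sum_congr rfl fun y _ => ENNReal.toReal_ofReal (hw y)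
    · refine Finset.sum_congr rfl fun y _ => ?_
      rw [Measure.smul_apply, smul_eq_mul, Measure.dirac_apply]
      by_cases h : p (totalMag n y) <;> simp [h, hw y]
  · intro y _
    rw [Measure.smul_apply, smul_eq_mul]
    exact ENNReal.mul_ne_top ENNReal.ofReal_ne_top (measure_ne_top _ _)

/-! ### Nearly Gaussian grids -/

/-- Upper partial sums of weights on a finite grid `u₀ + k h`, `k ≤ n`, that are Gaussian up to a
factor `exp (O((1 + |u|³) h))` in the window `|u| ≤ δ / h` and at most `F` outside it. -/
lemma grid_sum {D δ : ℝ} (hD : 0 < D) (hδ : 0 < δ) (hDδ : D * δ ≤ 1 / 6) :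
    ∃ C h0 : ℝ, 0 < C ∧ 0 < h0 ∧ ∀ (h x u0 F : ℝ) (n k1 : ℕ) (w : ℕ → ℝ), 0 < h → h ≤ h0 →
      0 ≤ x → x ^ 3 * h ≤ 1 → u0 ≤ 0 → δ / h < u0 + n * h → 0 ≤ F → (∀ k ≤ n, 0 ≤ w k) →
      (∀ k ≤ n, |u0 + k * h| ≤ δ / h → ∃ y, |y| ≤ D * (1 + |u0 + k * h| ^ 3) * h ∧
        w k = h * gDens (u0 + k * h) * exp y) →
      (∀ k ≤ n, δ / h < |u0 + k * h| → w k ≤ F) →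
      x ≤ u0 + k1 * h → u0 + k1 * h ≤ x + h →
      |(∑ k ∈ Finset.range (n + 1), if k1 ≤ k then w k else 0) - gTail x| ≤
        C * (1 + x ^ 3) * h * gTail x + (n + 1) * F := by
  obtain ⟨C, h0, hC, hh0, key⟩ := one_sided_sum hD hδ hDδ
  refine ⟨C, h0, hC, hh0, ?_⟩
  intro h x u0 F n k1 w hh hhle hx hxh hu0 hun hF hw hnear hfar hk1 hk1'
  have ha : 0 ≤ (δ / h - u0) / h := by
    have : 0 < δ / h := by positivity
    apply div_nonneg _ hh.le; linarith
  -- `k2` is the first index beyond the window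
  set k2 := ⌊(δ / h - u0) / h⌋₊ + 1 with hk2
  have hlt : ∀ k : ℕ, k < k2 → u0 + k * h ≤ δ / h := by
    intro k hk
    have := (Nat.le_floor_iff ha).1 (Nat.lt_succ_iff.1 hk)
    rw [le_div_iff₀ hh] at this; linarith
  have hge : ∀ k : ℕ, k2 ≤ k → δ / h < u0 + k * h := by
    intro k hk
    have := (Nat.floor_lt ha).1 (Nat.lt_of_succ_le hk)
    rw [div_lt_iff₀ hh] at this; linarith
  have hk2n : k2 ≤ n := by
    by_contra hc
    have := hlt n (not_le.1 hc)
    linarith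
  have e1 : (∑ k ∈ Finset.range (n + 1), if k1 ≤ k then w k else 0) =
      ∑ j ∈ Finset.range (n + 1 - k1), w (k1 + j) := by
    rw [← Finset.sum_filter, ← Finset.sum_Ico_eq_sum_range]
    refine Finset.sum_congr ?_ fun _ _ => rfl
    ext k; simp [and_comm]
  obtain ⟨P, hP⟩ : ∃ P, n + 1 - k1 = (k2 - k1) + P := ⟨n + 1 - k1 - (k2 - k1), by omega⟩
  rw [e1, hP, Finset.sum_range_add]
  have m1 := key h x (u0 + k1 * h) hh hhle hx hxh hk1 hk1' (k2 - k1) (fun j => w (k1 + j))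
    (by
      intro j hj
      have e : u0 + k1 * h + j * h = u0 + (k1 + j : ℕ) * h := by push_cast; ring
      have hpos : 0 ≤ u0 + (k1 + j : ℕ) * h := by
        rw [← e]; have : 0 ≤ (j : ℝ) * h := by positivity
        linarith
      have hle := hlt (k1 + j) (by omega)
      rw [e]
      refine ⟨hle, ?_⟩
      have := hnear (k1 + j) (by omega) (by rwa [abs_of_nonneg hpos])
      rwa [abs_of_nonneg hpos] at this)
    (by
      have := hge (max k1 k2) (le_max_right _ _)
      have e : ((max k1 k2 : ℕ) : ℝ) = k1 + (k2 - k1 : ℕ) := by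
        exact_mod_cast (by omega : max k1 k2 = k1 + (k2 - k1))
      rw [e] at this; linarith)
  have m2 : ∑ i ∈ Finset.range P, w (k1 + (k2 - k1 + i)) ≤ (n + 1) * F := by
    have hb : ∀ i ∈ Finset.range P, w (k1 + (k2 - k1 + i)) ≤ F := by
      intro i hi
      have hi' := Finset.mem_range.1 hi
      apply hfar _ (by omega)
      exact (hge _ (by omega)).trans_le (le_abs_self _)
    refine (Finset.sum_le_card_nsmul _ _ _ hb).trans ?_
    rw [Finset.card_range, nsmul_eq_mul]
    gcongr
    have : P ≤ n + 1 := by omega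
    exact_mod_cast this
  have m3 : 0 ≤ ∑ i ∈ Finset.range P, w (k1 + (k2 - k1 + i)) := by
    refine Finset.sum_nonneg fun i hi => hw _ ?_
    have hi' := Finset.mem_range.1 hi
    omega
  rw [abs_le] at m1 ⊢
  have : 0 ≤ ((n : ℝ) + 1) * F := by positivity
  constructor <;> linarith

/-- The moderate-deviation estimate for an abstract nearly Gaussian grid: the weights are Gaussian
up to a factor `exp (O((1 + |u|³) h))` in the window `|u| ≤ δ / h` and exponentially small outside.
The total mass is found by applying `grid_sum` at `0` to the grid and to its reflection. -/
lemma grid_ratio {D δ η A : ℝ} (hD : 0 < D) (hδ : 0 < δ) (hDδ : D * δ ≤ 1 / 6) (hη : 0 < η)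
    (hA : 0 < A) :
    ∃ C h0 : ℝ, 0 < C ∧ 0 < h0 ∧ ∀ (h x u0 F : ℝ) (n : ℕ) (w : ℕ → ℝ), 0 < h → h ≤ h0 →
      0 ≤ x → x ^ 3 * h ≤ 1 → u0 < -(δ / h) → δ / h < u0 + n * h → 0 ≤ F →
      (n + 1) * F ≤ A * exp (-(η / h ^ 2)) → (∀ k ≤ n, 0 ≤ w k) →
      (∀ k ≤ n, |u0 + k * h| ≤ δ / h → ∃ y, |y| ≤ D * (1 + |u0 + k * h| ^ 3) * h ∧
        w k = h * gDens (u0 + k * h) * exp y) →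
      (∀ k ≤ n, δ / h < |u0 + k * h| → w k ≤ F) →
      |(∑ k ∈ Finset.range (n + 1), if x < u0 + k * h then w k else 0) /
          (∑ k ∈ Finset.range (n + 1), w k) / gTail x - 1| ≤ C * (1 + x ^ 3) * h := by
  obtain ⟨C1, h1, hC1, hh1, key⟩ := grid_sum hD hδ hDδ
  obtain ⟨C2, h2, hC2, hh2, small⟩ := exp_small hη
  set B := C1 + A * C2 with hB
  have hB0 : 0 < B := by positivity
  refine ⟨4 * B, min (min h1 h2) (1 / (2 * B)), by positivity, by positivity, ?_⟩
  intro h x u0 F n w hh hhle hx hxh hu0 hun hF hFA hw hnear hfar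
  have hhle1 : h ≤ h1 := hhle.trans ((min_le_left _ _).trans (min_le_left _ _))
  have hhle2 : h ≤ h2 := hhle.trans ((min_le_left _ _).trans (min_le_right _ _))
  have hBh : B * h ≤ 1 / 2 := by
    have : h ≤ 1 / (2 * B) := hhle.trans (min_le_right _ _)
    rw [le_div_iff₀ (by positivity)] at this; linarith
  have hδh : 0 < δ / h := by positivity
  have absorb : ∀ z : ℝ, 0 ≤ z → z ^ 3 * h ≤ 1 →
      C1 * (1 + z ^ 3) * h * gTail z + (n + 1) * F ≤ B * (1 + z ^ 3) * h * gTail z := by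
    intro z hz hzh
    have := mul_le_mul_of_nonneg_left (small h z hh hhle2 hz hzh) hA.le
    rw [hB]; nlinarith
  -- for every `z ≥ 0` the condition `z < u k` selects the indices from `k1 z` on
  set k1 : ℝ → ℕ := fun z => ⌊(z - u0) / h⌋₊ + 1 with hk1
  have hsel : ∀ z : ℝ, 0 ≤ z → ∀ k : ℕ, z < u0 + k * h ↔ k1 z ≤ k := by
    intro z hz k
    have ha : 0 ≤ (z - u0) / h := by apply div_nonneg _ hh.le; linarith
    rw [hk1, Nat.succ_le_iff, Nat.floor_lt ha, div_lt_iff₀ hh]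
    constructor <;> intro hc <;> linarith
  have hk1u : ∀ z : ℝ, 0 ≤ z → z < u0 + k1 z * h ∧ u0 + k1 z * h ≤ z + h := by
    intro z hz
    refine ⟨(hsel z hz _).2 le_rfl, ?_⟩
    have : ¬ z < u0 + (k1 z - 1 : ℕ) * h := by rw [hsel z hz, hk1]; simp
    rw [hk1] at this ⊢
    push_cast at this ⊢
    simp at this
    linarith
  have right : ∀ z : ℝ, 0 ≤ z → z ^ 3 * h ≤ 1 →
      |(∑ k ∈ Finset.range (n + 1), if z < u0 + k * h then w k else 0) - gTail z| ≤
        B * (1 + z ^ 3) * h * gTail z := by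
    intro z hz hzh
    have := key h z u0 F n (k1 z) w hh hhle1 hz hzh (by linarith) hun hF hw hnear hfar
      (hk1u z hz).1.le (hk1u z hz).2
    simp_rw [hsel z hz]
    exact this.trans (absorb z hz hzh)
  have hT := right x hx hxh
  have hR := right 0 le_rfl (by norm_num)
  -- the lower half of the grid, read backwards
  have hk1n : k1 0 ≤ n := (hsel 0 le_rfl n).1 (by linarith)
  have hL : |(∑ k ∈ Finset.range (n + 1), if 0 < u0 + k * h then 0 else w k) - gTail 0| ≤
      B * (1 + 0 ^ 3) * h * gTail 0 := by
    have hrev : ∀ k ≤ n, -(u0 + n * h) + k * h = -(u0 + (n - k : ℕ) * h) := by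
      intro k hk; rw [Nat.cast_sub hk]; ring
    have := key h 0 (-(u0 + n * h)) F n (n + 1 - k1 0) (fun k => w (n - k)) hh hhle1 le_rfl
      (by norm_num) (by linarith) (by linarith) hF (fun k hk => hw _ (Nat.sub_le _ _))
      (by
        intro k hk hwin
        rw [hrev k hk, abs_neg] at hwin ⊢
        obtain ⟨y, hy, hwy⟩ := hnear (n - k) (Nat.sub_le _ _) hwin
        refine ⟨y, hy, ?_⟩
        have hg : gDens (-(u0 + (n - k : ℕ) * h)) = gDens (u0 + (n - k : ℕ) * h) := by
          unfold gDens; rw [neg_sq]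
        rw [hg]; exact hwy)
      (by
        intro k hk hwin
        rw [hrev k hk, abs_neg] at hwin
        exact hfar (n - k) (Nat.sub_le _ _) hwin)
      (by
        have := (hk1u 0 le_rfl).2
        rw [Nat.cast_sub (by omega)]; push_cast; linarith)
      (by
        have := (hk1u 0 le_rfl).1
        rw [Nat.cast_sub (by omega)]; push_cast; linarith)
    refine le_trans (le_of_eq ?_) (this.trans (absorb 0 le_rfl (by norm_num)))
    congr 2
    rw [← Finset.sum_range_reflect]
    refine Finset.sum_congr rfl fun k hk => ?_
    have hk' := Finset.mem_range.1 hk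
    have e : n + 1 - 1 - k = n - k := by omega
    rw [e]
    have hiff : (0 < u0 + (n - k : ℕ) * h) ↔ ¬ (n + 1 - k1 0 ≤ k) := by
      rw [hsel 0 le_rfl]; omega
    by_cases hc : n + 1 - k1 0 ≤ k
    · rw [if_neg (by rw [hiff]; exact not_not.2 hc), if_pos hc]
    · rw [if_pos (hiff.2 hc), if_neg hc]
  have hZ : ∑ k ∈ Finset.range (n + 1), w k =
      (∑ k ∈ Finset.range (n + 1), if 0 < u0 + k * h then w k else 0) +
      ∑ k ∈ Finset.range (n + 1), if 0 < u0 + k * h then 0 else w k := by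
    rw [← Finset.sum_add_distrib]
    refine Finset.sum_congr rfl fun k _ => ?_
    split_ifs <;> simp
  rw [hZ]
  set T := ∑ k ∈ Finset.range (n + 1), if x < u0 + k * h then w k else 0
  set R := ∑ k ∈ Finset.range (n + 1), if 0 < u0 + k * h then w k else 0
  set L := ∑ k ∈ Finset.range (n + 1), if 0 < u0 + k * h then 0 else w k
  rw [gTail_zero] at hR hL
  have hG := gTail_pos hx
  set G := gTail x
  have hZ1 : |R + L - 1| ≤ B * h := by
    rw [abs_le] at hR hL ⊢
    constructor <;> linarith
  have hZ0 : 1 / 2 ≤ R + L := by rw [abs_le] at hZ1; linarith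
  have hZpos : 0 < R + L := by linarith
  have e : T / (R + L) / G - 1 = ((T - G) - (R + L - 1) * G) / ((R + L) * G) := by
    field_simp; ring
  rw [e, abs_div, abs_of_pos (mul_pos hZpos hG), div_le_iff₀ (mul_pos hZpos hG)]
  have hx3 : 0 ≤ x ^ 3 := by positivity
  calc |(T - G) - (R + L - 1) * G| ≤ |T - G| + |(R + L - 1) * G| := abs_sub _ _
    _ ≤ B * (1 + x ^ 3) * h * G + B * h * G := by
        rw [abs_mul, abs_of_pos hG]; gcongr
    _ ≤ B * (1 + x ^ 3) * h * G + B * (1 + x ^ 3) * h * G := by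
        gcongr; exact le_mul_of_one_le_right hB0.le (by linarith)
    _ = 4 * B * (1 + x ^ 3) * h * (1 / 2 * G) := by ring
    _ ≤ _ := by gcongr

/-! ### The rescaled magnetization -/

/-- The grid of values `u k` of `W_n`: step `2 √v / √n`, and `u k = √n √v (lvlMag n k - m*)`. -/
lemma grid_point {n : ℕ} (hn : 0 < n) {v mstar : ℝ} (hv : 0 < v) (k : ℕ) :
    -(√n * √v * (1 + mstar)) + k * (2 * √v / √n) = √n * √v * (lvlMag n k - mstar) ∧
    (2 * (k : ℝ) - n - n * mstar) / √(n / v) = √n * √v * (lvlMag n k - mstar) := by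
  have hn' : (0 : ℝ) < n := by exact_mod_cast hn
  have hs : 0 < √(n : ℝ) := sqrt_pos.2 hn'
  have hq : 0 < √v := sqrt_pos.2 hv
  have hs2 : (n : ℝ) = √n ^ 2 := (sq_sqrt hn'.le).symm
  rw [sqrt_div hn'.le]
  unfold lvlMag
  set s := √(n : ℝ)
  rw [hs2]
  constructor
  · field_simp; ring
  · field_simp

/-- The error term of `lvlWeight_near` in the variable `U = √n √v |m - m*|` and the step
`h = 2 √v / √n`, with `q = √v` and `s = √n`. -/
lemma expansion_error_le {q s a D : ℝ} (hq : 0 < q) (hs1 : 1 ≤ s) (ha : 0 ≤ a) (hD : 0 ≤ D) :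
    D * (1 / s ^ 2 + a + s ^ 2 * a ^ 3) ≤
      D * (1 / (2 * q) + 1 / (2 * q ^ 2) + 1 / (2 * (q ^ 2) ^ 2)) * (1 + (s * q * a) ^ 3) *
        (2 * q / s) := by
  have hs : 0 < s := by linarith
  set U := s * q * a with hU
  have hU0 : 0 ≤ U := by positivity
  have hU3 : U ≤ 1 + U ^ 3 := by
    rcases le_total U 1 with h1 | h1
    · linarith [pow_nonneg hU0 3]
    · have := pow_le_pow_right₀ h1 (show 1 ≤ 3 by norm_num)
      rw [pow_one] at this; linarith
  have b1 : 1 / s ^ 2 ≤ 1 / (2 * q) * (1 + U ^ 3) * (2 * q / s) := by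
    calc 1 / s ^ 2 ≤ 1 / s := one_div_le_one_div_of_le hs (by nlinarith)
      _ = 1 / (2 * q) * 1 * (2 * q / s) := by field_simp
      _ ≤ _ := by gcongr; linarith [pow_nonneg hU0 3]
  have b2 : a ≤ 1 / (2 * q ^ 2) * (1 + U ^ 3) * (2 * q / s) := by
    calc a = 1 / (2 * q ^ 2) * U * (2 * q / s) := by rw [hU]; field_simp
      _ ≤ _ := by gcongr
  have b3 : s ^ 2 * a ^ 3 ≤ 1 / (2 * (q ^ 2) ^ 2) * (1 + U ^ 3) * (2 * q / s) := by
    calc s ^ 2 * a ^ 3 = 1 / (2 * (q ^ 2) ^ 2) * U ^ 3 * (2 * q / s) := by rw [hU]; field_simp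
      _ ≤ _ := by gcongr; linarith
  calc _ ≤ D * (1 / (2 * q) * (1 + U ^ 3) * (2 * q / s) +
        1 / (2 * q ^ 2) * (1 + U ^ 3) * (2 * q / s) +
        1 / (2 * (q ^ 2) ^ 2) * (1 + U ^ 3) * (2 * q / s)) := by gcongr
    _ = _ := by ring

set_option maxHeartbeats 1000000 in
/-- The statement for `n` large and `x³ ≲ √n`, with `h = 2 √v / √n` the lattice spacing of `W_n`:
after rescaling, the level weights satisfy the hypotheses of `grid_ratio`. -/
lemma tail_ratio_of_small_step (K J : ℝ) {mstar v : ℝ}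
    (hmem : mstar ∈ Set.Ioo (-1 : ℝ) 1)
    (hmin : ∀ y ∈ Set.Icc (-1 : ℝ) 1, phiKJ K J mstar ≤ phiKJ K J y)
    (huniq : ∀ y ∈ Set.Icc (-1 : ℝ) 1, phiKJ K J y = phiKJ K J mstar → y = mstar)
    (hv : 0 < v) (hvdef : v = iteratedDeriv 2 (phiKJ K J) mstar) :
    ∃ C h0 : ℝ, 0 < C ∧ 0 < h0 ∧ ∀ n : ℕ, 0 < n → ∀ x : ℝ, 0 ≤ x → 2 * √v / √n ≤ h0 →
      x ^ 3 * (2 * √v / √n) ≤ 1 →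
      |cubicProb n K J {y | x < (totalMag n y - n * mstar) / √(n / v)} / gTail x - 1| ≤
        C * (1 + x ^ 3) * (2 * √v / √n) := by
  obtain ⟨Dm, δm, hDm, hδm, hδ1, hδ2, near⟩ := lvlWeight_near K J hmem hmin
  rw [← hvdef] at near
  have hq : 0 < √v := sqrt_pos.2 hv
  have hq2 : v = √v ^ 2 := (sq_sqrt hv.le).symm
  set q := √v with hqdef
  set D := Dm * (1 / (2 * q) + 1 / (2 * v) + 1 / (2 * v ^ 2)) with hDdef
  have hD : 0 < D := by positivity
  set δ0 := min δm (1 / (12 * v * D)) with hδ0def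
  have hδ0 : 0 < δ0 := by positivity
  have hδ0m : δ0 ≤ δm := min_le_left _ _
  set δ := 2 * v * δ0 with hδdef
  have hδ : 0 < δ := by positivity
  have hDδ : D * δ ≤ 1 / 6 := by
    have : δ0 ≤ 1 / (12 * v * D) := min_le_right _ _
    rw [le_div_iff₀ (by positivity)] at this
    rw [hδdef]; linarith
  obtain ⟨η, hη, gap⟩ := phiKJ_gap K J hδ0 hmin huniq
  obtain ⟨C, h0, hC, hh0, main⟩ := grid_ratio (A := 4 * q / η) (η := 2 * v * η) hD hδ hDδ
    (by positivity) (by positivity)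
  refine ⟨C, h0, hC, hh0, ?_⟩
  intro n hn x hx hle hxh
  have hn' : (0 : ℝ) < n := by exact_mod_cast hn
  have hn1 : (1 : ℝ) ≤ n := by exact_mod_cast hn
  have hs : 0 < √(n : ℝ) := sqrt_pos.2 hn'
  have hs1 : 1 ≤ √(n : ℝ) := one_le_sqrt.2 hn1
  have hs2 : (n : ℝ) = √n ^ 2 := (sq_sqrt hn'.le).symm
  have hgrid := fun k => (grid_point (mstar := mstar) hn hv k).1
  have hgrid2 := fun k => (grid_point (mstar := mstar) hn hv k).2
  rw [← hqdef] at hgrid hgrid2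
  set s := √(n : ℝ) with hsdef
  set h := 2 * q / s with hhdef
  have hh : 0 < h := by positivity
  have hδh : δ / h = s * q * δ0 := by
    rw [hδdef, hhdef, hq2]; field_simp
  set c := log (2 / (π * n)) / 2 - log (1 - mstar ^ 2) / 2 with hcdef
  -- the Gaussian normalization of the level weights
  set Q := h / (√(2 * π) * (exp (-(n * phiKJ K J mstar)) * exp c)) with hQdef
  have hQ : 0 < Q := by positivity
  -- since `log (1 - m*²) ≤ 0`
  have hQle : h / (√(2 * π) * exp c) ≤ q := by
    have hm2 : log (1 - mstar ^ 2) ≤ 0 := by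
      apply log_nonpos
      · nlinarith [hmem.1, hmem.2]
      · nlinarith [sq_nonneg mstar]
    have hc : √(2 / (π * n)) ≤ exp c := by
      rw [← exp_log (show 0 < √(2 / (π * n)) by positivity), log_sqrt (by positivity)]
      apply exp_le_exp.2
      rw [hcdef]; linarith
    have h1 : √(2 * π) * √(2 / (π * n)) = 2 / s := by
      rw [← sqrt_mul (by positivity), show 2 * π * (2 / (π * n)) = 2 ^ 2 / n by
        field_simp, sqrt_div (by positivity), sqrt_sq (by norm_num)]
    rw [div_le_iff₀ (by positivity)]
    calc h = q * (√(2 * π) * √(2 / (π * n))) := by rw [h1, hhdef]; ring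
      _ ≤ _ := by gcongr
  have hdist : ∀ k, |s * q * (lvlMag n k - mstar)| = s * q * |lvlMag n k - mstar| := by
    intro k; rw [abs_mul, abs_of_pos (mul_pos hs hq)]
  have hlast : lvlMag n n = 1 := by unfold lvlMag; field_simp; norm_num
  have res := main h x (-(s * q * (1 + mstar))) (q * exp (-(n * η))) n
    (fun k => Q * lvlWeight n K J k) hh hle hx hxh
    (by
      rw [hδh]
      have : s * q * δ0 < s * q * (1 + mstar) := by gcongr; linarith
      linarith)
    (by
      rw [hδh, hgrid, hlast]
      gcongr; linarith)
    (by positivity)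
    (by
      have e1 : 2 * v * η / h ^ 2 = n * η / 2 := by
        rw [hhdef, hq2, hs2]; field_simp
      -- `t ≤ exp t` at `t = n η / 2`
      have e2 : n * η / 2 ≤ exp (n * η / 2) := by
        linarith [add_one_le_exp (n * η / 2)]
      rw [e1]
      have e3 : exp (-(n * η)) = exp (-(n * η / 2)) * exp (-(n * η / 2)) := by
        rw [← exp_add]; congr 1; ring
      have e4 : (n * η / 2) * exp (-(n * η / 2)) ≤ 1 := by
        rw [exp_neg, ← div_eq_mul_inv, div_le_one (exp_pos _)]; exact e2
      have e5 : (n : ℝ) * exp (-(n * η / 2)) ≤ 2 / η := by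
        rw [le_div_iff₀ hη]; linarith
      rw [e3]
      calc (n + 1) * (q * (exp (-(n * η / 2)) * exp (-(n * η / 2))))
          ≤ (2 * n) * (q * (exp (-(n * η / 2)) * exp (-(n * η / 2)))) := by gcongr; linarith
        _ = 2 * q * (n * exp (-(n * η / 2))) * exp (-(n * η / 2)) := by ring
        _ ≤ 2 * q * (2 / η) * exp (-(n * η / 2)) := by gcongr
        _ = _ := by ring)
    (fun k _ => mul_nonneg hQ.le (lvlWeight_nonneg _ _ _ _))
    (by
      intro k hk hwin
      rw [hgrid] at hwin ⊢
      rw [hdist, hδh] at hwin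
      have hwin' : |lvlMag n k - mstar| ≤ δ0 := le_of_mul_le_mul_left hwin (by positivity)
      obtain ⟨r, hr, hwr⟩ := near n k hn (hwin'.trans hδ0m)
      refine ⟨r, hr.trans ?_, ?_⟩
      · rw [hdist]
        have := expansion_error_le hq hs1 (abs_nonneg (lvlMag n k - mstar)) hDm.le
        rwa [← hq2, ← hs2] at this
      · have e : (n : ℝ) * (v / 2 * (lvlMag n k - mstar) ^ 2) =
            (s * q * (lvlMag n k - mstar)) ^ 2 / 2 := by rw [hq2, hs2]; ring
        have hQe : Q * (exp (-(n * phiKJ K J mstar)) * exp c) = h * (√(2 * π))⁻¹ := by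
          rw [hQdef]; field_simp
        change Q * lvlWeight n K J k = _
        rw [hwr, e, exp_add, gDens, neg_div, ← hcdef, ← mul_assoc Q, hQe]
        ring)
    (by
      intro k hk hwin
      rw [hgrid, hdist, hδh] at hwin
      have hwin' : δ0 < |lvlMag n k - mstar| := lt_of_mul_lt_mul_left hwin (by positivity)
      have := lvlWeight_far gap hn hk hwin'.le
      calc Q * lvlWeight n K J k
          ≤ Q * (exp (-(n * phiKJ K J mstar)) * exp (-(n * η))) := by gcongr
        _ = h / (√(2 * π) * exp c) * exp (-(n * η)) := by rw [hQdef]; field_simp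
        _ ≤ _ := by gcongr)
  have hsum : cubicProb n K J {y | x < (totalMag n y - n * mstar) / √(n / v)} =
      (∑ k ∈ Finset.range (n + 1), if x < -(s * q * (1 + mstar)) + k * h then
        Q * lvlWeight n K J k else 0) / ∑ k ∈ Finset.range (n + 1), Q * lvlWeight n K J k := by
    have h1 := cubicProb_eq hn K J (fun t => x < (t - n * mstar) / √(n / v))
    rw [h1, ← Finset.mul_sum]
    have h2 : ∀ k ∈ Finset.range (n + 1), (if x < -(s * q * (1 + mstar)) + k * h then
        Q * lvlWeight n K J k else 0) =
        Q * (if x < -(s * q * (1 + mstar)) + k * h then lvlWeight n K J k else 0) := by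
      intro k _; split_ifs <;> simp
    rw [Finset.sum_congr rfl h2, ← Finset.mul_sum, mul_div_mul_left _ _ hQ.ne']
    congr 1
    refine Finset.sum_congr rfl fun k _ => ?_
    rw [hgrid2, hgrid]
  rw [hsum]
  exact res

/-- Crude bound for the ratio when `x` stays bounded; it covers the finitely many `n` for which the
lattice spacing of `W_n` is not small. -/
lemma tail_ratio_of_large_step {P x B : ℝ} (hP0 : 0 ≤ P) (hP1 : P ≤ 1) (hx : 0 ≤ x) (hxB : x ≤ B) :
    |P / gTail x - 1| ≤ 1 / gTail B + 1 := by
  have hB := gTail_pos (hx.trans hxB)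
  have hG := gTail_pos hx
  have h1 : P / gTail x ≤ 1 / gTail B := div_le_div₀ zero_le_one hP1 hB (gTail_anti hxB)
  have h0 : 0 ≤ P / gTail x := by positivity
  rw [abs_le]; constructor <;> linarith

/-- Probabilities under `P_{n,K,J}` of events in terms of `S_n` lie in `[0, 1]`. -/
lemma cubicProb_mem_Icc {n : ℕ} (hn : 0 < n) (K J : ℝ) (p : ℝ → Prop) :
    cubicProb n K J {y | p (totalMag n y)} ∈ Set.Icc (0 : ℝ) 1 := by
  classical
  rw [cubicProb_eq hn]
  have hw := fun k => lvlWeight_nonneg n K J k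
  refine ⟨div_nonneg (Finset.sum_nonneg fun k _ => ?_) (Finset.sum_nonneg fun k _ => hw k),
    div_le_one_of_le₀ (Finset.sum_le_sum fun k _ => ?_) (Finset.sum_nonneg fun k _ => hw k)⟩
  · split_ifs
    exacts [hw k, le_rfl]
  · split_ifs
    exacts [le_rfl, hw k]

/-- Cramér-type moderate deviations for the rescaled magnetization
`W_n = (S_n − n m*)/σ_n` of the cubic Curie–Weiss model (unique nondegenerate
phase): there are `c, C > 0` such that for all `n ≥ 1` and `0 ≤ x ≤ c n^{1/6}`,
`|P_{n,K,J}(W_n > x)/P(Z > x) − 1| ≤ C (1+x³)/√n`. -/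
theorem stmt_17 (K J : ℝ) (hK : 0 < K) (mstar : ℝ)
    (hmem : mstar ∈ Set.Ioo (-1 : ℝ) 1)
    (hmin : ∀ y ∈ Set.Icc (-1 : ℝ) 1, phiKJ K J mstar ≤ phiKJ K J y)
    (huniq : ∀ y ∈ Set.Icc (-1 : ℝ) 1, phiKJ K J y = phiKJ K J mstar → y = mstar)
    (hconv : 0 < iteratedDeriv 2 (phiKJ K J) mstar) :
    ∃ c C : ℝ, 0 < c ∧ 0 < C ∧ ∀ n : ℕ, 1 ≤ n → ∀ x : ℝ,
      0 ≤ x → x ≤ c * (n : ℝ) ^ ((1 : ℝ)/6) →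
      |cubicProb n K J
            {y | x < (totalMag n y - n * mstar) /
              Real.sqrt (n / iteratedDeriv 2 (phiKJ K J) mstar)} /
          (ProbabilityTheory.gaussianReal 0 1 (Set.Ioi x)).toReal
        - 1| ≤ C * (1 + x ^ 3) / Real.sqrt n := by
  obtain ⟨C, h0, hC, hh0, main⟩ := tail_ratio_of_small_step K J hmem hmin huniq hconv rfl
  set v := iteratedDeriv 2 (phiKJ K J) mstar
  have hq : 0 < √v := sqrt_pos.2 hconv
  set c := min 1 (1 / (2 * √v)) with hc
  have hc0 : 0 < c := by positivity
  have hc3 : c ^ 3 * (2 * √v) ≤ 1 := by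
    have h1 : c ≤ 1 := min_le_left _ _
    have h2 : c * (2 * √v) ≤ 1 := by
      rw [← le_div_iff₀ (by positivity)]; exact min_le_right _ _
    calc c ^ 3 * (2 * √v) = c ^ 2 * (c * (2 * √v)) := by ring
      _ ≤ 1 * 1 := mul_le_mul (pow_le_one₀ hc0.le h1) h2 (by positivity) zero_le_one
      _ = 1 := one_mul 1
  set B := 2 * √v / h0 with hB
  have hB0 : 0 < B := by positivity
  have hM : 0 < 1 / gTail (1 + B) + 1 := by
    have := gTail_pos (show (0 : ℝ) ≤ 1 + B by positivity)
    positivity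
  set M := 1 / gTail (1 + B) + 1
  refine ⟨c, C * (2 * √v) + B * M, hc0, by positivity, ?_⟩
  intro n hn x hx hxc
  have hn' : (0 : ℝ) < n := by exact_mod_cast hn
  have hs : 0 < √(n : ℝ) := sqrt_pos.2 hn'
  have hx3s : x ^ 3 ≤ c ^ 3 * √n := by
    calc x ^ 3 ≤ (c * (n : ℝ) ^ ((1 : ℝ) / 6)) ^ 3 := by gcongr
      _ = c ^ 3 * √n := by
        rw [mul_pow, ← rpow_natCast ((n : ℝ) ^ ((1 : ℝ) / 6)), ← rpow_mul hn'.le, sqrt_eq_rpow]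
        norm_num
  have hx3 : 0 ≤ x ^ 3 := by positivity
  rw [le_div_iff₀ hs]
  change |_ / gTail x - 1| * _ ≤ _
  by_cases hh : 2 * √v / √n ≤ h0
  · have hxh : x ^ 3 * (2 * √v / √n) ≤ 1 := by
      rw [← mul_div_assoc, div_le_one hs]
      calc x ^ 3 * (2 * √v) ≤ c ^ 3 * √n * (2 * √v) := by gcongr
        _ = c ^ 3 * (2 * √v) * √n := by ring
        _ ≤ 1 * √n := by gcongr
        _ = √n := one_mul _
    calc _ ≤ C * (1 + x ^ 3) * (2 * √v / √n) * √n := by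
          gcongr; exact main n hn x hx hh hxh
      _ = C * (2 * √v) * (1 + x ^ 3) := by field_simp
      _ ≤ _ := by gcongr; linarith [mul_pos hB0 hM]
  -- here `n`, and with it `x`, is bounded
  · have hsB : √(n : ℝ) ≤ B := by
      rw [not_le, lt_div_iff₀ hs] at hh
      rw [hB, le_div_iff₀ hh0]; linarith
    have hxB : x ≤ 1 + B := by
      have h1 : c ^ 3 ≤ 1 := pow_le_one₀ hc0.le (min_le_left _ _)
      have h2 : x ^ 3 ≤ B := hx3s.trans (by nlinarith)
      rcases le_total x 1 with h3 | h3
      · linarith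
      · have := pow_le_pow_right₀ h3 (show 1 ≤ 3 by norm_num)
        rw [pow_one] at this; linarith
    have hP := cubicProb_mem_Icc hn K J (fun t => x < (t - n * mstar) / √(n / v))
    calc _ ≤ M * B := mul_le_mul (tail_ratio_of_large_step hP.1 hP.2 hx hxB) hsB hs.le hM.le
      _ ≤ (C * (2 * √v) + B * M) * 1 := by
        have : 0 < C * (2 * √v) := by positivity
        linarith
      _ ≤ _ := by gcongr; linarith
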